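/- arXiv:1503.03388 — 12 statements merged into one kernel-verified Lean document; each statement's English description precedes it below -/
import Mathlib

section
/- Consider an equilibrium of the closed-loop shape dynamics (i.e., real numbers κ_i, θ_i, κ_{ib} and positive reals ρ_i, ρ_{ib}, i = 1,…,n with indices mod n, satisfying E1–E5). Then for every i: cos κ_{ib} = 0 (so κ_{ib} ≡ ±π/2 mod 2π), sin κ_i ≠ 0, and θ_{i+1} ≡ π − κ_i (mod 2π), i.e. cos θ_{i+1} = −cos κ_i and sin θ_{i+1} = sin κ_i. In particular the branch θ_{i+1} ≡ π + κ_i (mod 2π) is impossible. -/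
open Real

/-- Equilibrium hypotheses (E1)-(E5) of the closed-loop shape dynamics of the
`n`-agent beacon-referenced cyclic CB pursuit system, with indices mod `n`. -/
theorem stmt0 (n : ℕ) [NeZero n] (hn : 2 ≤ n)
    (μ lam α0 : ℝ) (α : ZMod n → ℝ)
    (hμ : 0 < μ) (hlam : lam ∈ Set.Ioo (0:ℝ) 1)
    (κ θ κb ρ ρb : ZMod n → ℝ)
    (hρ : ∀ i, 0 < ρ i) (hρb : ∀ i, 0 < ρb i)
    (hE1 : ∀ i, cos (κ i) + cos (θ (i+1)) = 0)
    (hE2 : ∀ i, μ * ((1 - lam) * sin (κ i - α i) + lam * sin (κb i - α0))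
          = (lam / ρ i) * (sin (κ i) + sin (θ (i+1))))
    (hE3 : ∀ i, (1 / ρ i) * (sin (κ i) + sin (θ (i+1)))
          = (1 / ρ (i-1)) * (sin (κ (i-1)) + sin (θ i)))
    (hE4 : ∀ i, cos (κb i) = 0)
    (hE5 : ∀ i, (1 / ρ i) * (sin (κ i) + sin (θ (i+1)))
          = (1 / ρb i) * sin (κb i)) :
    ∀ i, cos (κb i) = 0 ∧ sin (κ i) ≠ 0 ∧
      cos (θ (i+1)) = - cos (κ i) ∧ sin (θ (i+1)) = sin (κ i) ∧
      ∀ k : ℤ, θ (i+1) ≠ π + κ i + 2 * π * k := by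
  intro i
  have hb : sin (κb i) ≠ 0 := by
    intro h
    have h1 := sin_sq_add_cos_sq (κb i)
    rw [h, hE4 i] at h1
    norm_num at h1
  have hsum : sin (κ i) + sin (θ (i+1)) ≠ 0 := by
    intro h
    have h1 := hE5 i
    rw [h, mul_zero] at h1
    exact mul_ne_zero (one_div_ne_zero (hρb i).ne') hb h1.symm
  have hc : cos (θ (i+1)) = - cos (κ i) := by linarith [hE1 i]
  have hs : sin (θ (i+1)) = sin (κ i) := by
    have h1 := sin_sq_add_cos_sq (κ i)
    have h2 := sin_sq_add_cos_sq (θ (i+1))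
    rw [hc] at h2
    have h3 : (sin (κ i) + sin (θ (i+1))) * (sin (θ (i+1)) - sin (κ i)) = 0 := by
      linear_combination h2 - h1
    rcases mul_eq_zero.mp h3 with h | h
    · exact absurd h hsum
    · linarith
  refine ⟨hE4 i, ?_, hc, hs, ?_⟩
  · intro h
    apply hsum
    rw [hs, h, add_zero]
  · intro k hk
    apply hsum
    have h1 : θ (i+1) = (κ i + π) + k * (2 * π) := by rw [hk]; ring
    rw [h1, sin_add_int_mul_two_pi, sin_add_pi]
    ring
end

section
/- At any equilibrium of the closed-loop shape dynamics, the quantity sin κ_{ib} / ρ_{ib} is independent of i, and consequently exactly one of the following holds: sin κ_{ib} = 1 for every i ∈ {1,…,n}, or sin κ_{ib} = −1 for every i ∈ {1,…,n}. -/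
open Real

/-- Equilibrium hypotheses (E1)-(E5) of the closed-loop shape dynamics of the
`n`-agent beacon-referenced cyclic CB pursuit system, with indices mod `n`. -/
theorem stmt2 (n : ℕ) [NeZero n] (hn : 2 ≤ n)
    (μ lam α0 : ℝ) (α : ZMod n → ℝ)
    (hμ : 0 < μ) (hlam : lam ∈ Set.Ioo (0:ℝ) 1)
    (κ θ κb ρ ρb : ZMod n → ℝ)
    (hρ : ∀ i, 0 < ρ i) (hρb : ∀ i, 0 < ρb i)
    (hE1 : ∀ i, cos (κ i) + cos (θ (i+1)) = 0)
    (hE2 : ∀ i, μ * ((1 - lam) * sin (κ i - α i) + lam * sin (κb i - α0))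
          = (lam / ρ i) * (sin (κ i) + sin (θ (i+1))))
    (hE3 : ∀ i, (1 / ρ i) * (sin (κ i) + sin (θ (i+1)))
          = (1 / ρ (i-1)) * (sin (κ (i-1)) + sin (θ i)))
    (hE4 : ∀ i, cos (κb i) = 0)
    (hE5 : ∀ i, (1 / ρ i) * (sin (κ i) + sin (θ (i+1)))
          = (1 / ρb i) * sin (κb i)) :
    (∀ i j, sin (κb i) / ρb i = sin (κb j) / ρb j) ∧
      Xor' (∀ i, sin (κb i) = 1) (∀ i, sin (κb i) = -1) := by
  have hstep : ∀ i, sin (κb i) / ρb i = sin (κb (i-1)) / ρb (i-1) := by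
    intro i
    have h1 := hE5 i
    have h2 := hE5 (i-1)
    have h3 := hE3 i
    rw [sub_add_cancel] at h2
    rw [div_eq_inv_mul, div_eq_inv_mul, ← one_div, ← one_div, ← h1, ← h2, h3]
  have hnat : ∀ k : ℕ, sin (κb (k : ZMod n)) / ρb (k : ZMod n) = sin (κb 0) / ρb 0 := by
    intro k
    induction k with
    | zero => simp
    | succ k ih =>
      rw [hstep, ← ih]
      simp
  have h0 : ∀ i, sin (κb i) / ρb i = sin (κb 0) / ρb 0 := by
    intro i
    have h := hnat i.val
    rwa [ZMod.natCast_zmod_val] at h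
  have hpm : ∀ i, sin (κb i) = 1 ∨ sin (κb i) = -1 := by
    intro i
    have h := sin_sq_add_cos_sq (κb i)
    rw [hE4 i] at h
    have h' : (sin (κb i) - 1) * (sin (κb i) + 1) = 0 := by linarith
    rcases mul_eq_zero.mp h' with h'' | h''
    · left; linarith
    · right; linarith
  refine ⟨fun i j => (h0 i).trans (h0 j).symm, ?_⟩
  rcases hpm 0 with h | h
  · left
    refine ⟨fun i => ?_, fun hc => ?_⟩
    · rcases hpm i with hi | hi
      · exact hi
      · have e := h0 i
        rw [h, hi] at e
        have p1 : 0 < 1 / ρb 0 := one_div_pos.mpr (hρb 0)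
        have p2 : 0 < 1 / ρb i := one_div_pos.mpr (hρb i)
        rw [neg_div] at e
        linarith
    · have := hc 0
      linarith
  · right
    refine ⟨fun i => ?_, fun hc => ?_⟩
    · rcases hpm i with hi | hi
      · have e := h0 i
        rw [h, hi] at e
        have p1 : 0 < 1 / ρb 0 := one_div_pos.mpr (hρb 0)
        have p2 : 0 < 1 / ρb i := one_div_pos.mpr (hρb i)
        rw [neg_div] at e
        linarith
      · exact hi
    · have := hc 0
      linarith
end

section
/- At any equilibrium of the closed-loop shape dynamics, for every i the distances are determined by the angles via ρ_{ib} = λ / ( μ·(1−λ)·sin κ_{ib}·sin(κ_i − α_i) + μ·λ·cos α_0 ) and ρ_i = 2·ρ_{ib}·sin κ_{ib}·sin κ_i. -/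
open Real

/-- Equilibrium hypotheses (E1)-(E5) of the closed-loop shape dynamics of the
`n`-agent beacon-referenced cyclic CB pursuit system, with indices mod `n`. -/
theorem stmt3 (n : ℕ) [NeZero n] (hn : 2 ≤ n)
    (μ lam α0 : ℝ) (α : ZMod n → ℝ)
    (hμ : 0 < μ) (hlam : lam ∈ Set.Ioo (0:ℝ) 1)
    (κ θ κb ρ ρb : ZMod n → ℝ)
    (hρ : ∀ i, 0 < ρ i) (hρb : ∀ i, 0 < ρb i)
    (hE1 : ∀ i, cos (κ i) + cos (θ (i+1)) = 0)
    (hE2 : ∀ i, μ * ((1 - lam) * sin (κ i - α i) + lam * sin (κb i - α0))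
          = (lam / ρ i) * (sin (κ i) + sin (θ (i+1))))
    (hE3 : ∀ i, (1 / ρ i) * (sin (κ i) + sin (θ (i+1)))
          = (1 / ρ (i-1)) * (sin (κ (i-1)) + sin (θ i)))
    (hE4 : ∀ i, cos (κb i) = 0)
    (hE5 : ∀ i, (1 / ρ i) * (sin (κ i) + sin (θ (i+1)))
          = (1 / ρb i) * sin (κb i)) :
    ∀ i, ρb i = lam / (μ * (1 - lam) * sin (κb i) * sin (κ i - α i) + μ * lam * cos α0) ∧
      ρ i = 2 * ρb i * sin (κb i) * sin (κ i) := by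
  intro i
  have h1 := hE1 i
  have h2 := hE2 i
  have h4 := hE4 i
  have h5 := hE5 i
  have hr := (hρ i).ne'
  have hrb := (hρb i).ne'
  have hl : lam ≠ 0 := hlam.1.ne'
  have hs : sin (κb i) ^ 2 = 1 := by
    have := sin_sq_add_cos_sq (κb i)
    rw [h4] at this
    linarith
  rw [sin_sub (κb i) α0, h4] at h2
  have hk := sin_sq_add_cos_sq (κ i)
  have ht := sin_sq_add_cos_sq (θ (i+1))
  generalize sin (κb i) = s at *
  have hs0 : s ≠ 0 := by
    rintro rfl
    norm_num at hs
  constructor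
  · have hD : μ * (1 - lam) * s * sin (κ i - α i) + μ * lam * cos α0 = lam / ρb i := by
      have e : lam / ρ i * (sin (κ i) + sin (θ (i+1))) = lam * (1 / ρb i * s) := by
        rw [← h5]; ring
      rw [e] at h2
      have e2 : lam / ρb i = lam / ρb i * s ^ 2 := by rw [hs, mul_one]
      rw [e2]
      linear_combination s * h2 - μ * lam * cos α0 * hs
    rw [hD]
    field_simp
  · have h6 : (sin (κ i) + sin (θ (i+1))) * ρb i = s * ρ i := by
      field_simp at h5
      linarith
    have hS : sin (κ i) + sin (θ (i+1)) ≠ 0 := by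
      intro h
      rw [h, zero_mul] at h6
      exact mul_ne_zero hs0 hr h6.symm
    have hc : cos (θ (i+1)) = - cos (κ i) := by linarith
    rw [hc] at ht
    have hd : sin (θ (i+1)) = sin (κ i) := by
      apply mul_left_cancel₀ hS
      linear_combination ht - hk
    rw [hd] at h6
    linear_combination -s * h6 - ρ i * hs
end

section
/- (Proposition 1(a).) At any equilibrium of the closed-loop shape dynamics, the distances from the agents to the beacon are all equal: ρ_{1b} = ρ_{2b} = ⋯ = ρ_{nb}. Hence every relative equilibrium of the beacon-referenced cyclic CB pursuit system is a circling equilibrium in which all agents lie on a common circle centered at the beacon. -/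
open Real

/-- Equilibrium hypotheses (E1)-(E5) of the closed-loop shape dynamics of the
`n`-agent beacon-referenced cyclic CB pursuit system, with indices mod `n`. -/
theorem stmt4 (n : ℕ) [NeZero n] (hn : 2 ≤ n)
    (μ lam α0 : ℝ) (α : ZMod n → ℝ)
    (hμ : 0 < μ) (hlam : lam ∈ Set.Ioo (0:ℝ) 1)
    (κ θ κb ρ ρb : ZMod n → ℝ)
    (hρ : ∀ i, 0 < ρ i) (hρb : ∀ i, 0 < ρb i)
    (hE1 : ∀ i, cos (κ i) + cos (θ (i+1)) = 0)
    (hE2 : ∀ i, μ * ((1 - lam) * sin (κ i - α i) + lam * sin (κb i - α0))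
          = (lam / ρ i) * (sin (κ i) + sin (θ (i+1))))
    (hE3 : ∀ i, (1 / ρ i) * (sin (κ i) + sin (θ (i+1)))
          = (1 / ρ (i-1)) * (sin (κ (i-1)) + sin (θ i)))
    (hE4 : ∀ i, cos (κb i) = 0)
    (hE5 : ∀ i, (1 / ρ i) * (sin (κ i) + sin (θ (i+1)))
          = (1 / ρb i) * sin (κb i)) :
    ∀ i j, ρb i = ρb j := by
  have hstep : ∀ i : ZMod n, (1 / ρb (i+1)) * sin (κb (i+1)) = (1 / ρb i) * sin (κb i) := by
    intro i
    have h := hE3 (i+1)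
    rw [add_sub_cancel_right, hE5 (i+1), hE5 i] at h
    exact h
  have hnat : ∀ k : ℕ, (1 / ρb (k : ZMod n)) * sin (κb (k : ZMod n))
      = (1 / ρb 0) * sin (κb 0) := by
    intro k
    induction k with
    | zero => simp
    | succ k ih => rw [Nat.cast_succ, hstep, ih]
  have hall : ∀ i : ZMod n, (1 / ρb i) * sin (κb i) = (1 / ρb 0) * sin (κb 0) := by
    intro i
    have h := hnat i.val
    rwa [ZMod.natCast_zmod_val] at h
  have hsq : ∀ i : ZMod n, ((1 / ρb i) * sin (κb i)) ^ 2 = (ρb i ^ 2)⁻¹ := by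
    intro i
    have h := sin_sq_add_cos_sq (κb i)
    rw [hE4 i] at h
    have h1 : sin (κb i) ^ 2 = 1 := by linarith
    rw [mul_pow, h1, mul_one, one_div, inv_pow]
  intro i j
  have h : (ρb i ^ 2)⁻¹ = (ρb j ^ 2)⁻¹ := by
    rw [← hsq i, ← hsq j, hall i, hall j]
  have h2 := inv_injective h
  exact (pow_left_inj₀ (hρb i).le (hρb j).le two_ne_zero).mp h2
end

section
/- At any equilibrium of the closed-loop shape dynamics, the following positivity conditions necessarily hold for every i: λ·cos α_0 + (1−λ)·sin κ_{ib}·sin(κ_i − α_i) > 0 and sin κ_{ib}·sin κ_i > 0. -/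
open Real

/-- Equilibrium hypotheses (E1)-(E5) of the closed-loop shape dynamics of the
`n`-agent beacon-referenced cyclic CB pursuit system, with indices mod `n`. -/
theorem stmt5 (n : ℕ) [NeZero n] (hn : 2 ≤ n)
    (μ lam α0 : ℝ) (α : ZMod n → ℝ)
    (hμ : 0 < μ) (hlam : lam ∈ Set.Ioo (0:ℝ) 1)
    (κ θ κb ρ ρb : ZMod n → ℝ)
    (hρ : ∀ i, 0 < ρ i) (hρb : ∀ i, 0 < ρb i)
    (hE1 : ∀ i, cos (κ i) + cos (θ (i+1)) = 0)
    (hE2 : ∀ i, μ * ((1 - lam) * sin (κ i - α i) + lam * sin (κb i - α0))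
          = (lam / ρ i) * (sin (κ i) + sin (θ (i+1))))
    (hE3 : ∀ i, (1 / ρ i) * (sin (κ i) + sin (θ (i+1)))
          = (1 / ρ (i-1)) * (sin (κ (i-1)) + sin (θ i)))
    (hE4 : ∀ i, cos (κb i) = 0)
    (hE5 : ∀ i, (1 / ρ i) * (sin (κ i) + sin (θ (i+1)))
          = (1 / ρb i) * sin (κb i)) :
    ∀ i, lam * cos α0 + (1 - lam) * sin (κb i) * sin (κ i - α i) > 0 ∧
      sin (κb i) * sin (κ i) > 0 := by
  intro i
  obtain ⟨hl0, hl1⟩ := hlam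
  have h1 := hE1 i
  have h2 := hE2 i
  have h4 := hE4 i
  have h5 := hE5 i
  have hs : sin (κb i) * sin (κb i) = 1 := by
    have := sin_sq_add_cos_sq (κb i)
    rw [h4] at this
    nlinarith
  have hr := hρ i
  have hrb := hρb i
  constructor
  · have e : lam / ρ i * (sin (κ i) + sin (θ (i+1))) = lam * (1 / ρb i * sin (κb i)) := by
      rw [← h5]; ring
    rw [e, sin_sub (κb i), h4] at h2
    have hp : 0 < lam * (1 / ρb i) := by positivity
    have key : μ * (lam * cos α0 + (1 - lam) * sin (κb i) * sin (κ i - α i))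
        = lam * (1 / ρb i) := by
      linear_combination sin (κb i) * h2 + (lam * (1 / ρb i) - μ * lam * cos α0) * hs
    rw [← key] at hp
    exact pos_of_mul_pos_right hp hμ.le
  · have hp : 0 < 1 / ρb i := by positivity
    have hq : 0 < 1 / ρ i := by positivity
    have key : (1 / ρ i) * (sin (κb i) * (sin (κ i) + sin (θ (i+1)))) = 1 / ρb i := by
      linear_combination sin (κb i) * h5 + (1 / ρb i) * hs
    rw [← key] at hp
    have h6 : 0 < sin (κb i) * (sin (κ i) + sin (θ (i+1))) := pos_of_mul_pos_right hp hq.le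
    have hne : sin (κ i) + sin (θ (i+1)) ≠ 0 := by
      intro h; rw [h] at h6; simp at h6
    have h7 : (sin (κ i) + sin (θ (i+1))) * (sin (κ i) - sin (θ (i+1))) = 0 := by
      linear_combination sin_sq_add_cos_sq (κ i) - sin_sq_add_cos_sq (θ (i+1))
        - (cos (κ i) - cos (θ (i+1))) * h1
    have h8 := (mul_eq_zero.mp h7).resolve_left hne
    have h9 : sin (θ (i+1)) = sin (κ i) := by linarith
    rw [h9] at h6
    nlinarith
end

section
/- At any equilibrium of the closed-loop shape dynamics, for every i one has sin(κ_{i+1} − α_{i+1}) = sin(κ_i − α_i) (indices mod n). -/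
open Real

/-- Equilibrium hypotheses (E1)-(E5) of the closed-loop shape dynamics of the
`n`-agent beacon-referenced cyclic CB pursuit system, with indices mod `n`. -/
theorem stmt6 (n : ℕ) [NeZero n] (hn : 2 ≤ n)
    (μ lam α0 : ℝ) (α : ZMod n → ℝ)
    (hμ : 0 < μ) (hlam : lam ∈ Set.Ioo (0:ℝ) 1)
    (κ θ κb ρ ρb : ZMod n → ℝ)
    (hρ : ∀ i, 0 < ρ i) (hρb : ∀ i, 0 < ρb i)
    (hE1 : ∀ i, cos (κ i) + cos (θ (i+1)) = 0)
    (hE2 : ∀ i, μ * ((1 - lam) * sin (κ i - α i) + lam * sin (κb i - α0))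
          = (lam / ρ i) * (sin (κ i) + sin (θ (i+1))))
    (hE3 : ∀ i, (1 / ρ i) * (sin (κ i) + sin (θ (i+1)))
          = (1 / ρ (i-1)) * (sin (κ (i-1)) + sin (θ i)))
    (hE4 : ∀ i, cos (κb i) = 0)
    (hE5 : ∀ i, (1 / ρ i) * (sin (κ i) + sin (θ (i+1)))
          = (1 / ρb i) * sin (κb i)) :
    ∀ i, sin (κ (i+1) - α (i+1)) = sin (κ i - α i) := by
  intro i
  have h3 := hE3 (i+1)
  rw [add_sub_cancel_right] at h3
  have h5 := hE5 (i+1)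
  have h5' := hE5 i
  have hs : sin (κb (i+1)) = sin (κb i) := by
    have e : (1 / ρb (i+1)) * sin (κb (i+1)) = (1 / ρb i) * sin (κb i) := by
      rw [← h5, ← h5', h3]
    have p1 : 0 < 1 / ρb (i+1) := one_div_pos.mpr (hρb _)
    have p2 : 0 < 1 / ρb i := one_div_pos.mpr (hρb _)
    have key : ∀ x, cos x = 0 → sin x = 1 ∨ sin x = -1 := by
      intro x hx
      have := sin_sq_add_cos_sq x
      rw [hx] at this
      exact sq_eq_sq_iff_eq_or_eq_neg.mp (by linarith)
    rcases key _ (hE4 (i+1)) with a | a <;> rcases key _ (hE4 i) with b | b <;>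
      rw [a, b] at e <;> rw [a, b] <;> linarith
  have hsub : sin (κb (i+1) - α0) = sin (κb i - α0) := by
    rw [sin_sub, sin_sub, hE4, hE4, hs]
  have e1 := hE2 (i+1)
  have e2 := hE2 i
  rw [hsub] at e1
  have hc : (lam / ρ (i+1)) * (sin (κ (i+1)) + sin (θ (i+1+1)))
      = (lam / ρ i) * (sin (κ i) + sin (θ (i+1))) := by
    linear_combination lam * h3
  have hm : μ * (1 - lam) ≠ 0 := mul_ne_zero hμ.ne' (by linarith [hlam.2])
  apply mul_left_cancel₀ hm
  linear_combination e1 - e2 + hc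
end

section
/- Let ρ_1, ρ_2, ρ_{1b}, ρ_{2b} > 0 and κ_1, κ_2, θ_1, θ_2, κ_{1b}, κ_{2b} ∈ ℝ satisfy the two-agent shape constraints: (π + κ_1 − θ_2) + (π + κ_2 − θ_1) ∈ 2πℤ, ρ_1 = ρ_{1b}·exp(√−1·(κ_{1b} − κ_1)) + ρ_{2b}·exp(√−1·(κ_{2b} − θ_2)), and ρ_2 = ρ_{2b}·exp(√−1·(κ_{2b} − κ_2)) + ρ_{1b}·exp(√−1·(κ_{1b} − θ_1)) (equalities in ℂ). Then ρ_1 = ρ_2, θ_1 ≡ κ_1 (mod 2π), and θ_2 ≡ κ_2 (mod 2π). -/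
open Real

theorem stmt13 (ρ1 ρ2 ρ1b ρ2b : ℝ) (h1 : 0 < ρ1) (h2 : 0 < ρ2)
    (h1b : 0 < ρ1b) (h2b : 0 < ρ2b)
    (κ1 κ2 θ1 θ2 κ1b κ2b : ℝ)
    (hclosure : ∃ K : ℤ, (π + κ1 - θ2) + (π + κ2 - θ1) = 2 * π * K)
    (hc1 : (ρ1 : ℂ) = (ρ1b : ℂ) * Complex.exp (Complex.I * ((κ1b : ℂ) - (κ1 : ℂ)))
          + (ρ2b : ℂ) * Complex.exp (Complex.I * ((κ2b : ℂ) - (θ2 : ℂ))))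
    (hc2 : (ρ2 : ℂ) = (ρ2b : ℂ) * Complex.exp (Complex.I * ((κ2b : ℂ) - (κ2 : ℂ)))
          + (ρ1b : ℂ) * Complex.exp (Complex.I * ((κ1b : ℂ) - (θ1 : ℂ)))) :
    ρ1 = ρ2 ∧ (∃ k : ℤ, θ1 = κ1 + 2 * π * k) ∧ (∃ k : ℤ, θ2 = κ2 + 2 * π * k) := by
  obtain ⟨K, hK⟩ := hclosure
  have e1 : Complex.exp (Complex.I * ((κ1b : ℂ) - (θ1 : ℂ)))
      = Complex.exp (Complex.I * ((κ1b : ℂ) - (κ1 : ℂ))) * Complex.exp (((κ1 - θ1 : ℝ) : ℂ) * Complex.I) := by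
    rw [← Complex.exp_add]
    congr 1
    push_cast
    ring
  have e2 : Complex.exp (Complex.I * ((κ2b : ℂ) - (κ2 : ℂ)))
      = Complex.exp (Complex.I * ((κ2b : ℂ) - (θ2 : ℂ))) * Complex.exp (((κ1 - θ1 : ℝ) : ℂ) * Complex.I) := by
    rw [← Complex.exp_add, Complex.exp_eq_exp_iff_exists_int]
    refine ⟨1 - K, ?_⟩
    have : κ2 = 2 * π * K - 2 * π - κ1 + θ2 + θ1 := by linarith
    rw [this]
    push_cast
    ring
  have key : (ρ2 : ℂ) = ρ1 * Complex.exp (((κ1 - θ1 : ℝ) : ℂ) * Complex.I) := by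
    rw [hc2, hc1, e1, e2]
    ring
  have hn : ρ1 = ρ2 := by
    have := congrArg norm key
    rw [norm_mul, Complex.norm_exp_ofReal_mul_I, Complex.norm_real, Complex.norm_real,
      Real.norm_of_nonneg h1.le, Real.norm_of_nonneg h2.le] at this
    linarith
  have hne : (ρ1 : ℂ) ≠ 0 := by exact_mod_cast h1.ne'
  have hE : Complex.exp (((κ1 - θ1 : ℝ) : ℂ) * Complex.I) = 1 := by
    apply mul_left_cancel₀ hne
    rw [← key, hn, mul_one]
  rw [Complex.exp_eq_one_iff] at hE
  obtain ⟨n, hE⟩ := hE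
  have hr : κ1 - θ1 = n * (2 * π) := by
    have := congrArg Complex.im hE
    simpa using this
  refine ⟨hn, ⟨-n, ?_⟩, ⟨n + 1 - K, ?_⟩⟩
  · push_cast
    linarith
  · push_cast
    linarith
end

section
/- (Type 1 CCW equilibrium, Table 1.) Fix μ > 0, λ ∈ (0,1), α_0, α_1, α_2 ∈ ℝ, write α⁺ = (α_1+α_2)/2 and α⁻ = (α_1−α_2)/2, and assume cos α⁻ > 0 and λ·cos α_0 + (1−λ)·cos α⁺ > 0. Then the point with κ_{1b} = κ_{2b} = π/2, κ_1 = π/2 + α⁻, κ_2 = π/2 − α⁻, ρ_{1b} = ρ_{2b} = λ/(μ·λ·cos α_0 + μ·(1−λ)·cos α⁺), and ρ = 2·ρ_{1b}·cos α⁻ has all coordinates ρ, ρ_{1b}, ρ_{2b} > 0 and is an equilibrium of the two-agent closed-loop vector field f (i.e., f vanishes there); moreover it satisfies the constraint equations g_1 = g_2 = 0. -/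
open Real

/-- The two-agent closed-loop vector field on states
`ξ = (κ₁, κ₂, ρ, κ₁b, κ₂b, ρ₁b, ρ₂b)`. -/
noncomputable def twoAgentF (μ lam α0 α1 α2 : ℝ) (ξ : Fin 7 → ℝ) : Fin 7 → ℝ :=
  ![-μ * ((1 - lam) * sin (ξ 0 - α1) + lam * sin (ξ 3 - α0))
      + (lam / ξ 2) * (sin (ξ 0) + sin (ξ 1)),
    -μ * ((1 - lam) * sin (ξ 1 - α2) + lam * sin (ξ 4 - α0))
      + (lam / ξ 2) * (sin (ξ 0) + sin (ξ 1)),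
    -(cos (ξ 0) + cos (ξ 1)),
    (-μ * ((1 - lam) * sin (ξ 0 - α1) + lam * sin (ξ 3 - α0))
      + (lam / ξ 2) * (sin (ξ 0) + sin (ξ 1)))
      - (1 / ξ 2) * (sin (ξ 0) + sin (ξ 1)) + (1 / ξ 5) * sin (ξ 3),
    (-μ * ((1 - lam) * sin (ξ 1 - α2) + lam * sin (ξ 4 - α0))
      + (lam / ξ 2) * (sin (ξ 0) + sin (ξ 1)))
      - (1 / ξ 2) * (sin (ξ 0) + sin (ξ 1)) + (1 / ξ 6) * sin (ξ 4),
    -cos (ξ 3),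
    -cos (ξ 4)]

/-- First constraint function for the two-agent system. -/
noncomputable def gOne (ξ : Fin 7 → ℝ) : ℝ :=
  ξ 2 - ξ 5 * cos (ξ 3 - ξ 0) - ξ 6 * cos (ξ 4 - ξ 1)

/-- Second constraint function for the two-agent system. -/
noncomputable def gTwo (ξ : Fin 7 → ℝ) : ℝ :=
  ξ 5 * sin (ξ 3 - ξ 0) + ξ 6 * sin (ξ 4 - ξ 1)

/-- The Type 1 CCW circling equilibrium of the two-agent system (Table 1):
`f` vanishes there and the constraints `g₁ = g₂ = 0` hold. -/
theorem stmt14 (μ lam α0 α1 α2 : ℝ) (hμ : 0 < μ) (hlam : lam ∈ Set.Ioo (0:ℝ) 1)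
    (αp αm : ℝ) (hαp : αp = (α1 + α2) / 2) (hαm : αm = (α1 - α2) / 2)
    (hcos : cos αm > 0)
    (hpos : lam * cos α0 + (1 - lam) * cos αp > 0) :
    (let ρ1b : ℝ := lam / (μ * lam * cos α0 + μ * (1 - lam) * cos αp)
     let ξ : Fin 7 → ℝ := ![π/2 + αm, π/2 - αm, 2 * ρ1b * cos αm, π/2, π/2, ρ1b, ρ1b]
     0 < ξ 2 ∧ 0 < ξ 5 ∧ 0 < ξ 6 ∧
       twoAgentF μ lam α0 α1 α2 ξ = 0 ∧ gOne ξ = 0 ∧ gTwo ξ = 0) := by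
  intro ρ1b ξ
  obtain ⟨h0, h1⟩ := hlam
  have hD : 0 < μ * lam * cos α0 + μ * (1 - lam) * cos αp := by
    have := mul_pos hμ hpos
    linarith
  have hr : 0 < ρ1b := div_pos h0 hD
  have hlr : lam / ρ1b = μ * lam * cos α0 + μ * (1 - lam) * cos αp := by
    have h : ρ1b * (μ * lam * cos α0 + μ * (1 - lam) * cos αp) = lam :=
      div_mul_cancel₀ _ hD.ne'
    rw [div_eq_iff hr.ne']
    linarith
  have e0 : ξ 0 = π/2 + αm := rfl
  have e1 : ξ 1 = π/2 - αm := rfl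
  have e2 : ξ 2 = 2 * ρ1b * cos αm := rfl
  have e3 : ξ 3 = π/2 := rfl
  have e4 : ξ 4 = π/2 := rfl
  have e5 : ξ 5 = ρ1b := rfl
  have e6 : ξ 6 = ρ1b := rfl
  clear_value ξ ρ1b
  have s0 : sin (ξ 0) = cos αm := by rw [e0, add_comm, sin_add_pi_div_two]
  have s1 : sin (ξ 1) = cos αm := by rw [e1, sin_pi_div_two_sub]
  have c0 : cos (ξ 0) = - sin αm := by rw [e0, add_comm, cos_add_pi_div_two]
  have c1 : cos (ξ 1) = sin αm := by rw [e1, cos_pi_div_two_sub]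
  have t0 : sin (ξ 0 - α1) = cos αp := by
    rw [← sin_pi_div_two_sub, e0, hαm, hαp]; congr 1; ring
  have t1 : sin (ξ 1 - α2) = cos αp := by
    rw [← sin_pi_div_two_sub, e1, hαm, hαp]; congr 1; ring
  have t3 : sin (ξ 3 - α0) = cos α0 := by
    rw [← cos_neg, ← sin_pi_div_two_sub, e3, sub_neg_eq_add, sin_sub, sin_add]; simp
  have t4 : sin (ξ 4 - α0) = cos α0 := by rw [e4, ← e3, t3]
  have k : ∀ a : ℝ, a / ξ 2 * (cos αm + cos αm) = a / ρ1b := by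
    intro a
    rw [e2]
    field_simp
    ring
  have d0 : ξ 3 - ξ 0 = -αm := by rw [e3, e0]; ring
  have d1 : ξ 4 - ξ 1 = αm := by rw [e4, e1]; ring
  refine ⟨by rw [e2]; positivity, by rw [e5]; exact hr, by rw [e6]; exact hr, ?_, ?_, ?_⟩
  · unfold twoAgentF
    rw [t0, t1, t3, t4, s0, s1, c0, c1, k, k, hlr, e3, e4, e5, e6, sin_pi_div_two, cos_pi_div_two]
    funext i
    fin_cases i <;> simp <;> ring
  · unfold gOne
    rw [d0, d1, cos_neg, e2, e5, e6]; ring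
  · unfold gTwo
    rw [d0, d1, sin_neg, e5, e6]; ring
end

section
/- At every state ξ = (κ_1, κ_2, ρ, κ_{1b}, κ_{2b}, ρ_{1b}, ρ_{2b}) with ρ, ρ_{1b}, ρ_{2b} > 0, the derivatives of the constraint functions along the two-agent closed-loop vector field f satisfy Dg_1(ξ)[f(ξ)] = −((sin κ_1 + sin κ_2)/ρ)·g_2(ξ) and Dg_2(ξ)[f(ξ)] = ((sin κ_1 + sin κ_2)/ρ)·g_1(ξ), where Dg_j(ξ) denotes the (Fréchet) derivative of g_j at ξ. In particular, the constraint manifold M = {ξ : g_1(ξ) = g_2(ξ) = 0} is invariant under the dynamics. -/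
open Real

/-- The derivatives of the constraint functions along the two-agent closed-loop
vector field; in particular the constraint manifold is invariant. -/
theorem stmt15 (μ lam α0 α1 α2 : ℝ) (hμ : 0 < μ) (hlam : lam ∈ Set.Ioo (0:ℝ) 1)
    (ξ : Fin 7 → ℝ) (hρ : 0 < ξ 2) (h5 : 0 < ξ 5) (h6 : 0 < ξ 6) :
    fderiv ℝ gOne ξ (twoAgentF μ lam α0 α1 α2 ξ)
        = -((sin (ξ 0) + sin (ξ 1)) / ξ 2) * gTwo ξ ∧
    fderiv ℝ gTwo ξ (twoAgentF μ lam α0 α1 α2 ξ)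
        = ((sin (ξ 0) + sin (ξ 1)) / ξ 2) * gOne ξ ∧
    (gOne ξ = 0 ∧ gTwo ξ = 0 →
      fderiv ℝ gOne ξ (twoAgentF μ lam α0 α1 α2 ξ) = 0 ∧
      fderiv ℝ gTwo ξ (twoAgentF μ lam α0 α1 α2 ξ) = 0) := by
  have p : ∀ i : Fin 7, HasFDerivAt (fun x : Fin 7 → ℝ => x i)
      (ContinuousLinearMap.proj (R := ℝ) (φ := fun _ : Fin 7 => ℝ) i) ξ :=
    fun i => (ContinuousLinearMap.proj (R := ℝ) (φ := fun _ : Fin 7 => ℝ) i).hasFDerivAt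
  have d1 := ((p 2).sub ((p 5).mul ((p 3).sub (p 0)).cos)).sub ((p 6).mul ((p 4).sub (p 1)).cos)
  have d2 := ((p 5).mul ((p 3).sub (p 0)).sin).add ((p 6).mul ((p 4).sub (p 1)).sin)
  have e1 : fderiv ℝ gOne ξ = _ := HasFDerivAt.fderiv (f := gOne) d1
  have e2 : fderiv ℝ gTwo ξ = _ := HasFDerivAt.fderiv (f := gTwo) d2
  have c0 : cos (ξ 0) = cos (ξ 3) * cos (ξ 3 - ξ 0) + sin (ξ 3) * sin (ξ 3 - ξ 0) := by
    rw [← cos_sub]; congr 1; ring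
  have c1 : cos (ξ 1) = cos (ξ 4) * cos (ξ 4 - ξ 1) + sin (ξ 4) * sin (ξ 4 - ξ 1) := by
    rw [← cos_sub]; congr 1; ring
  have s0 : sin (ξ 0) = sin (ξ 3) * cos (ξ 3 - ξ 0) - cos (ξ 3) * sin (ξ 3 - ξ 0) := by
    rw [← sin_sub]; congr 1; ring
  have s1 : sin (ξ 1) = sin (ξ 4) * cos (ξ 4 - ξ 1) - cos (ξ 4) * sin (ξ 4 - ξ 1) := by
    rw [← sin_sub]; congr 1; ring
  have v0 : ∀ F : Fin 7 → ℝ, fderiv ℝ gOne ξ F = F 2 - (ξ 5 * (-sin (ξ 3 - ξ 0) * (F 3 - F 0))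
      + cos (ξ 3 - ξ 0) * F 5) - (ξ 6 * (-sin (ξ 4 - ξ 1) * (F 4 - F 1))
      + cos (ξ 4 - ξ 1) * F 6) := by
    intro F; rw [e1]; simp
  have v1 : ∀ F : Fin 7 → ℝ, fderiv ℝ gTwo ξ F = (ξ 5 * (cos (ξ 3 - ξ 0) * (F 3 - F 0))
      + sin (ξ 3 - ξ 0) * F 5) + (ξ 6 * (cos (ξ 4 - ξ 1) * (F 4 - F 1))
      + sin (ξ 4 - ξ 1) * F 6) := by
    intro F; rw [e2]; simp
  set F := twoAgentF μ lam α0 α1 α2 ξ with hF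
  have f2 : F 2 = -(cos (ξ 0) + cos (ξ 1)) := rfl
  have f5 : F 5 = -cos (ξ 3) := rfl
  have f6 : F 6 = -cos (ξ 4) := rfl
  have f3 : F 3 = F 0 - (1 / ξ 2) * (sin (ξ 0) + sin (ξ 1)) + (1 / ξ 5) * sin (ξ 3) := rfl
  have f4 : F 4 = F 1 - (1 / ξ 2) * (sin (ξ 0) + sin (ξ 1)) + (1 / ξ 6) * sin (ξ 4) := rfl
  have a5 : ξ 5 * (F 3 - F 0) = sin (ξ 3) - ξ 5 * ((sin (ξ 0) + sin (ξ 1)) / ξ 2) := by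
    rw [f3]; field_simp; ring
  have a6 : ξ 6 * (F 4 - F 1) = sin (ξ 4) - ξ 6 * ((sin (ξ 0) + sin (ξ 1)) / ξ 2) := by
    rw [f4]; field_simp; ring
  have aρ : (sin (ξ 0) + sin (ξ 1)) / ξ 2 * ξ 2 = sin (ξ 0) + sin (ξ 1) := by
    field_simp
  have r1 : fderiv ℝ gOne ξ F = -((sin (ξ 0) + sin (ξ 1)) / ξ 2) * gTwo ξ := by
    rw [v0, f2, f5, f6, gTwo]
    linear_combination sin (ξ 3 - ξ 0) * a5 + sin (ξ 4 - ξ 1) * a6 - c0 - c1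
  have r2 : fderiv ℝ gTwo ξ F = ((sin (ξ 0) + sin (ξ 1)) / ξ 2) * gOne ξ := by
    rw [v1, f5, f6, gOne]
    linear_combination cos (ξ 3 - ξ 0) * a5 + cos (ξ 4 - ξ 1) * a6 - s0 - s1 - aρ
  refine ⟨r1, r2, fun h => ?_⟩
  rw [r1, r2, h.1, h.2]
  simp
end

section
/- Fix μ > 0, λ ∈ (0,1), α_0, α_1, α_2 ∈ ℝ with cos α⁻ > 0 and λ·cos α_0 + (1−λ)·cos α⁺ > 0, and let ξ̄ be the Type 1 CCW equilibrium: κ_{1b} = κ_{2b} = π/2, κ_1 = π/2 + α⁻, κ_2 = π/2 − α⁻, ρ_{1b} = ρ_{2b} = λ/(μλcos α_0 + μ(1−λ)cos α⁺), ρ = 2ρ_{1b}cos α⁻. Then the characteristic polynomial of the 7×7 Jacobian matrix A of the two-agent closed-loop vector field f at ξ̄ is P(x) = (x² + δ²)·(x² + λΨ·x + λδ²)·(x³ + λΨ·x² + δ²·x + (1−λ)·μ·sin α⁺·δ²), where δ = μ(cos α_0 + ((1−λ)/λ)·cos α⁺) and Ψ = μ(sin α_0 + ((1−λ)/λ)·sin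 α⁺). -/
open Real

set_option maxHeartbeats 4000000 in
lemma detAux2 {R : Type*} [CommRing R] (x p q u l c w d : R) (h : 2 * (c * w) = d) :
  Matrix.det !![x + p + l*u, -(l*u), l*w, q, 0,0,0;
     l*u, x+p-l*u, l*w, 0, q, 0, 0;
     -c, -c, x, 0,0,0,0;
     p+(l-1)*u, -((l-1)*u), (l-1)*w, x+q, 0, d, 0;
     (l-1)*u, p-(l-1)*u, (l-1)*w, 0, x+q, 0, d;
     0,0,0,-1,0,x,0;
     0,0,0,0,-1,0,x] = (x^2+d)*(x^2+(p+q)*x+l*d)*(x^3+(p+q)*x^2+d*x+p*d) := by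
  subst h
  simp [Matrix.det_succ_row_zero, Fin.sum_univ_succ, Fin.succAbove]
  ring

open Polynomial in
set_option maxHeartbeats 4000000 in
lemma cpAux (p q u l c w d : ℝ) (h : 2 * (c * w) = d) :
  Matrix.charpoly !![-p - l*u, l*u, -(l*w), -q, 0,0,0;
     -(l*u), -p+l*u, -(l*w), 0, -q, 0, 0;
     c, c, 0, 0,0,0,0;
     -p-(l-1)*u, ((l-1)*u), -((l-1)*w), -q, 0, -d, 0;
     -((l-1)*u), -p+(l-1)*u, -((l-1)*w), 0, -q, 0, -d;
     0,0,0,1,0,0,0;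
     0,0,0,0,1,0,0] = (X^2+C d)*(X^2+C (p+q)*X+C (l*d))*(X^3+C (p+q)*X^2+C d*X+C (p*d)) := by
  have hD := detAux2 (X : ℝ[X]) (C p) (C q) (C u) (C l) (C c) (C w) (C d)
    (by rw [← h]; simp only [map_mul]; rfl)
  rw [C_add, C_mul, C_mul]
  refine Eq.trans ?_ hD
  rw [Matrix.charpoly]
  congr 1
  ext1 i j
  fin_cases i <;> fin_cases j <;>
    simp [Matrix.charmatrix_apply] <;> (try ring)

lemma pd (k : Fin 7) (ξ : Fin 7 → ℝ) : HasFDerivAt (fun ξ : Fin 7 → ℝ => ξ k)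
    (ContinuousLinearMap.proj (R:=ℝ) (φ := fun _ : Fin 7 => ℝ) k) ξ :=
  hasFDerivAt_apply k ξ

lemma hk (μ lam α0 a : ℝ) (i j : Fin 7) (l : ℝ) (ξ : Fin 7 → ℝ) (h2 : ξ 2 ≠ 0) (v : Fin 7 → ℝ) :
  fderiv ℝ (fun ξ : Fin 7 → ℝ => -μ * ((1 - lam) * sin (ξ i - a) + lam * sin (ξ j - α0))
      + (l / ξ 2) * (sin (ξ 0) + sin (ξ 1))) ξ v = 
    -μ * ((1 - lam) * (cos (ξ i - a) * v i) + lam * (cos (ξ j - α0) * v j))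
     + (-(l * v 2 / ξ 2 ^2) * (sin (ξ 0) + sin (ξ 1)) + l / ξ 2 * (cos (ξ 0) * v 0 + cos (ξ 1) * v 1)) := by
  have h := (((((pd i ξ).sub_const a).sin.const_mul (1-lam)).add (((pd j ξ).sub_const α0).sin.const_mul lam)).const_mul (-μ)).add ((((hasDerivAt_inv h2).comp_hasFDerivAt ξ (pd 2 ξ)).const_mul l).mul ((pd 0 ξ).sin.add (pd 1 ξ).sin))
  rw [HasFDerivAt.fderiv (h.congr_of_eventuallyEq (Filter.Eventually.of_forall fun y => by simp [div_eq_mul_inv]))]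
  simp
  field_simp
  ring

lemma hkb (μ lam α0 a : ℝ) (i j m : Fin 7) (ξ : Fin 7 → ℝ) (h2 : ξ 2 ≠ 0) (hm : ξ m ≠ 0) (v : Fin 7 → ℝ) :
  fderiv ℝ (fun ξ : Fin 7 → ℝ => (-μ * ((1 - lam) * sin (ξ i - a) + lam * sin (ξ j - α0))
      + (lam / ξ 2) * (sin (ξ 0) + sin (ξ 1)))
      - (1 / ξ 2) * (sin (ξ 0) + sin (ξ 1)) + (1 / ξ m) * sin (ξ j)) ξ v = 
    -μ * ((1 - lam) * (cos (ξ i - a) * v i) + lam * (cos (ξ j - α0) * v j))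
     + (-((lam-1) * v 2 / ξ 2 ^2) * (sin (ξ 0) + sin (ξ 1)) + (lam-1) / ξ 2 * (cos (ξ 0) * v 0 + cos (ξ 1) * v 1))
     + (-(v m / ξ m ^ 2) * sin (ξ j) + 1 / ξ m * (cos (ξ j) * v j)) := by
  have h := ((((((pd i ξ).sub_const a).sin.const_mul (1-lam)).add (((pd j ξ).sub_const α0).sin.const_mul lam)).const_mul (-μ)).add ((((hasDerivAt_inv h2).comp_hasFDerivAt ξ (pd 2 ξ)).const_mul (lam-1)).mul ((pd 0 ξ).sin.add (pd 1 ξ).sin))).add (((hasDerivAt_inv hm).comp_hasFDerivAt ξ (pd m ξ)).mul (pd j ξ).sin)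
  rw [HasFDerivAt.fderiv (h.congr_of_eventuallyEq (Filter.Eventually.of_forall fun y => by
    simp [div_eq_mul_inv]; ring))]
  simp
  field_simp
  ring

lemma hr (ξ : Fin 7 → ℝ) (v : Fin 7 → ℝ) :
  fderiv ℝ (fun ξ : Fin 7 → ℝ => -(cos (ξ 0) + cos (ξ 1))) ξ v = sin (ξ 0) * v 0 + sin (ξ 1) * v 1 := by
  rw [HasFDerivAt.fderiv (f := fun ξ : Fin 7 → ℝ => -(cos (ξ 0) + cos (ξ 1))) (((pd 0 ξ).cos.add (pd 1 ξ).cos).neg)]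
  simp
  ring

lemma hrb (j : Fin 7) (ξ : Fin 7 → ℝ) (v : Fin 7 → ℝ) :
  fderiv ℝ (fun ξ : Fin 7 → ℝ => -cos (ξ j)) ξ v = sin (ξ j) * v j := by
  rw [HasFDerivAt.fderiv (f := fun ξ : Fin 7 → ℝ => -cos (ξ j)) ((pd j ξ).cos.neg)]
  simp

lemma jac (μ lam α0 α1 α2 : ℝ) (ξ : Fin 7 → ℝ) (h2 : ξ 2 ≠ 0) (h5 : ξ 5 ≠ 0) (h6 : ξ 6 ≠ 0)
    (S T s c d : ℝ) (hc : c ≠ 0)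
    (e1 : cos (ξ 0 - α1) = S) (e2 : cos (ξ 1 - α2) = S) (e3 : cos (ξ 3 - α0) = T)
    (e4 : cos (ξ 4 - α0) = T) (e5 : cos (ξ 0) = -s) (e6 : cos (ξ 1) = s)
    (e7 : sin (ξ 0) = c) (e8 : sin (ξ 1) = c) (e9 : cos (ξ 3) = 0) (e10 : cos (ξ 4) = 0)
    (e11 : sin (ξ 3) = 1) (e12 : sin (ξ 4) = 1) (e13 : ξ 2 = 2 * c / d) (e14 : ξ 5 = 1 / d)
    (e15 : ξ 6 = 1 / d) (hd : d ≠ 0) :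
    (Matrix.of fun i j =>
         fderiv ℝ (fun ξ => twoAgentF μ lam α0 α1 α2 ξ i) ξ (Pi.single j 1)) =
    !![-(μ*(1-lam)*S) - lam*(s*d/(2*c)), lam*(s*d/(2*c)), -(lam*(d^2/(2*c))), -(μ*lam*T), 0,0,0;
     -(lam*(s*d/(2*c))), -(μ*(1-lam)*S)+lam*(s*d/(2*c)), -(lam*(d^2/(2*c))), 0, -(μ*lam*T), 0, 0;
     c, c, 0, 0,0,0,0;
     -(μ*(1-lam)*S)-(lam-1)*(s*d/(2*c)), ((lam-1)*(s*d/(2*c))), -((lam-1)*(d^2/(2*c))), -(μ*lam*T), 0, -d^2, 0;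
     -((lam-1)*(s*d/(2*c))), -(μ*(1-lam)*S)+(lam-1)*(s*d/(2*c)), -((lam-1)*(d^2/(2*c))), 0, -(μ*lam*T), 0, -d^2;
     0,0,0,1,0,0,0;
     0,0,0,0,1,0,0] := by
  have r0 := hk μ lam α0 α1 0 3 lam ξ h2
  have r1 := hk μ lam α0 α2 1 4 lam ξ h2
  have r3 := hkb μ lam α0 α1 0 3 5 ξ h2 h5
  have r4 := hkb μ lam α0 α2 1 4 6 ξ h2 h6
  rw [e1, e3, e5, e6, e7, e8, e13] at r0
  rw [e2, e4, e5, e6, e7, e8, e13] at r1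
  rw [e1, e3, e5, e6, e7, e8, e9, e11, e13, e14] at r3
  rw [e2, e4, e5, e6, e7, e8, e10, e12, e13, e15] at r4
  have r2 := hr ξ
  have r5 := hrb 3 ξ
  have r6 := hrb 4 ξ
  rw [e7, e8] at r2
  rw [e11] at r5
  rw [e12] at r6
  ext i j
  rw [Matrix.of_apply]
  fin_cases i
  · refine (r0 _).trans ?_
    fin_cases j <;> simp <;> (try field_simp) <;> (try ring)
  · refine (r1 _).trans ?_
    fin_cases j <;> simp <;> (try field_simp) <;> (try ring)
  · refine (r2 _).trans ?_
    fin_cases j <;> simp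
  · refine (r3 _).trans ?_
    fin_cases j <;> simp <;> (try field_simp) <;> (try ring)
  · refine (r4 _).trans ?_
    fin_cases j <;> simp <;> (try field_simp) <;> (try ring)
  · refine (r5 _).trans ?_
    fin_cases j <;> simp
  · refine (r6 _).trans ?_
    fin_cases j <;> simp

open Polynomial in
/-- The characteristic polynomial of the Jacobian of the two-agent closed-loop
vector field at the Type 1 CCW circling equilibrium. -/
theorem stmt16 (μ lam α0 α1 α2 : ℝ) (hμ : 0 < μ) (hlam : lam ∈ Set.Ioo (0:ℝ) 1)
    (αp αm : ℝ) (hαp : αp = (α1 + α2) / 2) (hαm : αm = (α1 - α2) / 2)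
    (hcos : cos αm > 0)
    (hpos : lam * cos α0 + (1 - lam) * cos αp > 0) :
    (let ρ1b : ℝ := lam / (μ * lam * cos α0 + μ * (1 - lam) * cos αp)
     let ξbar : Fin 7 → ℝ := ![π/2 + αm, π/2 - αm, 2 * ρ1b * cos αm, π/2, π/2, ρ1b, ρ1b]
     let A : Matrix (Fin 7) (Fin 7) ℝ :=
       Matrix.of fun i j =>
         fderiv ℝ (fun ξ => twoAgentF μ lam α0 α1 α2 ξ i) ξbar (Pi.single j 1)
     let δ : ℝ := μ * (cos α0 + ((1 - lam) / lam) * cos αp)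
     let Ψ : ℝ := μ * (sin α0 + ((1 - lam) / lam) * sin αp)
     A.charpoly = (X ^ 2 + C (δ ^ 2)) * (X ^ 2 + C (lam * Ψ) * X + C (lam * δ ^ 2)) *
       (X ^ 3 + C (lam * Ψ) * X ^ 2 + C (δ ^ 2) * X + C ((1 - lam) * μ * sin αp * δ ^ 2))) := by
  obtain ⟨hl0, hl1⟩ := hlam
  intro ρ1b ξbar A δ Ψ
  have hl : lam ≠ 0 := hl0.ne'
  have hδ : δ = μ * (lam * cos α0 + (1 - lam) * cos αp) / lam := by
    simp only [δ]; field_simp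
  have hδ0 : δ ≠ 0 := by rw [hδ]; positivity
  have hρ : ρ1b = 1 / δ := by
    rw [hδ, one_div_div]; simp only [ρ1b]; congr 1; ring
  have hρ0 : ρ1b ≠ 0 := by rw [hρ]; exact one_div_ne_zero hδ0
  have hA := jac μ lam α0 α1 α2 ξbar
    (show 2 * ρ1b * cos αm ≠ 0 from mul_ne_zero (mul_ne_zero two_ne_zero hρ0) hcos.ne')
    hρ0 hρ0 (sin αp) (sin α0) (sin αm) (cos αm) δ hcos.ne'
    (show cos (π/2 + αm - α1) = _ by
      rw [← cos_pi_div_two_sub, hαp, hαm]; congr 1; ring)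
    (show cos (π/2 - αm - α2) = _ by
      rw [← cos_pi_div_two_sub, hαp, hαm]; congr 1; ring)
    (cos_pi_div_two_sub α0) (cos_pi_div_two_sub α0)
    (show cos (π/2 + αm) = _ by rw [add_comm, cos_add_pi_div_two])
    (cos_pi_div_two_sub αm)
    (show sin (π/2 + αm) = _ by rw [add_comm, sin_add_pi_div_two])
    (sin_pi_div_two_sub αm) cos_pi_div_two cos_pi_div_two sin_pi_div_two sin_pi_div_two
    (show 2 * ρ1b * cos αm = _ by rw [hρ]; ring) hρ hρ hδ0
  have hA' : A = _ := hA
  rw [hA']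
  have hcc : 2 * (cos αm * (δ^2/(2*cos αm))) = δ^2 := by
    have := hcos.ne'
    field_simp
  have hΨ : lam * Ψ = μ*(1-lam)*sin αp + μ*lam*sin α0 := by
    simp only [Ψ]; field_simp; ring
  have hlast : (1 - lam) * μ * sin αp * δ ^ 2 = (μ*(1-lam)*sin αp) * δ^2 := by ring
  rw [hΨ, hlast]
  exact cpAux _ _ _ _ _ _ _ hcc
end

section
/- Let λ ∈ (0,1), μ > 0, δ ∈ ℝ with δ ≠ 0, and Ψ, α⁺ ∈ ℝ. Every complex root of the cubic polynomial x³ + λΨ·x² + δ²·x + (1−λ)·μ·sin α⁺·δ² has strictly negative real part if and only if Ψ > 0, sin α⁺ > 0, and λΨ − (1−λ)·μ·sin α⁺ > 0. In particular, if additionally Ψ = μ(sin α_0 + ((1−λ)/λ)·sin α⁺) for some α_0 with sin α_0 > 0, the third condition is automatic, since then λΨ − (1−λ)μ·sin α⁺ = μλ·sin α_0 > 0. -/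
open Real

theorem rh_real_root (a b c : ℝ) : ∃ r : ℝ, r ^ 3 + a * r ^ 2 + b * r + c = 0 := by
  set M : ℝ := 1 + |a| + |b| + |c| with hM
  have ha := abs_nonneg a
  have hb := abs_nonneg b
  have hc := abs_nonneg c
  have ha1 := neg_abs_le a
  have ha2 := le_abs_self a
  have hb1 := neg_abs_le b
  have hb2 := le_abs_self b
  have hc1 := neg_abs_le c
  have hc2 := le_abs_self c
  have hM1 : 1 ≤ M := by linarith
  have hM2 : M ≤ M ^ 2 := by nlinarith
  have hM3 : M ^ 3 = M ^ 2 + |a| * M ^ 2 + |b| * M ^ 2 + |c| * M ^ 2 := by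
    rw [show M ^ 3 = M * M ^ 2 by ring]
    nth_rewrite 1 [hM]
    ring
  have hA : |a * M ^ 2| = |a| * M ^ 2 := by rw [abs_mul, abs_of_nonneg (by positivity : 0 ≤ M ^ 2)]
  have hB : |b * M| ≤ |b| * M ^ 2 := by
    rw [abs_mul, abs_of_nonneg (by linarith : 0 ≤ M)]
    exact mul_le_mul_of_nonneg_left hM2 hb
  have hC : |c| ≤ |c| * M ^ 2 := le_mul_of_one_le_right hc (by linarith)
  have hA' := abs_le.1 hA.le
  have hB' := abs_le.1 hB
  have hC' := abs_le.1 hC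
  have hcont : ContinuousOn (fun r : ℝ => r ^ 3 + a * r ^ 2 + b * r + c) (Set.Icc (-M) M) := by
    fun_prop
  have := intermediate_value_Icc (by linarith : -M ≤ M) hcont
  obtain ⟨r, -, hr⟩ := this (show (0:ℝ) ∈ _ by
    constructor
    · show (-M) ^ 3 + a * (-M) ^ 2 + b * (-M) + c ≤ 0
      have : (-M) ^ 3 + a * (-M) ^ 2 + b * (-M) + c = -(M ^ 3) + a * M ^ 2 - b * M + c := by ring
      linarith [hA'.1, hA'.2, hB'.1, hB'.2, hC'.1, hC'.2]
    · show 0 ≤ M ^ 3 + a * M ^ 2 + b * M + c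
      linarith [hA'.1, hA'.2, hB'.1, hB'.2, hC'.1, hC'.2])
  exact ⟨r, hr⟩

theorem rh_cubic (a b c : ℝ) (hb : 0 < b) :
    (∀ z : ℂ, z ^ 3 + (a : ℂ) * z ^ 2 + (b : ℂ) * z + (c : ℂ) = 0 → z.re < 0) ↔
      (0 < a ∧ 0 < c ∧ 0 < a * b - c) := by
  constructor
  · intro h
    obtain ⟨r, hr⟩ := rh_real_root a b c
    have hr0 : r < 0 := by
      have := h (r : ℂ) (by exact_mod_cast hr)
      simpa using this
    obtain ⟨p, hp⟩ : ∃ p, p = a + r := ⟨_, rfl⟩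
    obtain ⟨q, hq⟩ : ∃ q, q = b + r * p := ⟨_, rfl⟩
    have ea : a = p - r := by linarith
    have eb : b = q - r * p := by linarith
    have ec : c = -(r * q) := by rw [hq, hp]; linarith
    obtain ⟨s, hs⟩ := IsAlgClosed.exists_pow_nat_eq ((p : ℂ) ^ 2 - 4 * q) (n := 2) (by norm_num)
    have key : ∀ z : ℂ, z ^ 2 + p * z + q = 0 → z.re < 0 := by
      intro z hz
      apply h
      rw [ea, eb, ec]
      push_cast
      linear_combination (z - r) * hz
    have h1 := key ((-p + s) / 2) (by linear_combination hs / 4)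
    have h2 := key ((-p - s) / 2) (by linear_combination hs / 4)
    have e1 : (((-p + s) / 2 : ℂ)).re = (-p + s.re) / 2 := by simp
    have e2 : (((-p - s) / 2 : ℂ)).re = (-p - s.re) / 2 := by simp
    rw [e1] at h1
    rw [e2] at h2
    have hs' := congrArg Complex.re hs
    simp [pow_two] at hs'
    have hp0 : 0 < p := by linarith
    have hq0 : 0 < q := by nlinarith [mul_pos_of_neg_of_neg h1 h2, mul_self_nonneg s.im]
    have hrq : r * q < 0 := mul_neg_of_neg_of_pos hr0 hq0
    refine ⟨by linarith, by linarith, ?_⟩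
    have : a * b - c = p * q + (-r) * p ^ 2 + r ^ 2 * p := by rw [ea, eb, ec]; ring
    rw [this]
    have : 0 < -r := by linarith
    positivity
  · rintro ⟨ha, hc, hd⟩ z hz
    by_contra hx
    push Not at hx
    have hre := congrArg Complex.re hz
    have him := congrArg Complex.im hz
    obtain ⟨x, y⟩ := z
    simp [pow_succ] at hre him hx
    have h1 : y * (3 * x ^ 2 - y ^ 2 + 2 * a * x + b) = 0 := by linear_combination him
    rcases mul_eq_zero.1 h1 with hy | hy
    · subst hy
      have : x ^ 3 + a * x ^ 2 + b * x + c = 0 := by linear_combination hre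
      have : 0 < x ^ 3 + a * x ^ 2 + b * x + c := by positivity
      linarith
    · have : 8 * x ^ 3 + 8 * a * x ^ 2 + 2 * (b + a ^ 2) * x + (a * b - c) = 0 := by
        linear_combination (3 * x + a) * hy - hre
      have : 0 < 8 * x ^ 3 + 8 * a * x ^ 2 + 2 * (b + a ^ 2) * x + (a * b - c) := by positivity
      linarith

/-- Routh–Hurwitz for the cubic factor `x³ + λΨx² + δ²x + (1−λ)μ sin α⁺ δ²`:
all complex roots lie in the open left half-plane iff `Ψ > 0`, `sin α⁺ > 0` and
`λΨ − (1−λ)μ sin α⁺ > 0`; moreover, if `Ψ = μ(sin α0 + ((1−λ)/λ) sin α⁺)` then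
`λΨ − (1−λ)μ sin α⁺ = μλ sin α0`, so the third condition is automatic when
`sin α0 > 0`. -/
theorem stmt17 (lam μ δ Ψ αp : ℝ) (hlam : lam ∈ Set.Ioo (0:ℝ) 1) (hμ : 0 < μ)
    (hδ : δ ≠ 0) :
    ((∀ z : ℂ, z ^ 3 + ((lam * Ψ : ℝ) : ℂ) * z ^ 2 + ((δ ^ 2 : ℝ) : ℂ) * z
        + (((1 - lam) * μ * sin αp * δ ^ 2 : ℝ) : ℂ) = 0 → z.re < 0) ↔
      (0 < Ψ ∧ 0 < sin αp ∧ 0 < lam * Ψ - (1 - lam) * μ * sin αp)) ∧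
    (∀ α0 : ℝ, Ψ = μ * (sin α0 + ((1 - lam) / lam) * sin αp) →
      lam * Ψ - (1 - lam) * μ * sin αp = μ * lam * sin α0 ∧
      (0 < sin α0 → 0 < lam * Ψ - (1 - lam) * μ * sin αp)) := by
  obtain ⟨hl0, hl1⟩ := hlam
  have hd : 0 < δ ^ 2 := by positivity
  have hk : 0 < (1 - lam) * μ := mul_pos (by linarith) hμ
  refine ⟨?_, ?_⟩
  · rw [rh_cubic _ _ _ hd,
      show lam * Ψ * δ ^ 2 - (1 - lam) * μ * sin αp * δ ^ 2
        = (lam * Ψ - (1 - lam) * μ * sin αp) * δ ^ 2 by ring,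
      mul_pos_iff_of_pos_right hd, mul_pos_iff_of_pos_right hd,
      mul_pos_iff_of_pos_left hl0, mul_pos_iff_of_pos_left hk]
  · intro α0 h
    have e : lam * Ψ - (1 - lam) * μ * sin αp = μ * lam * sin α0 := by
      rw [h]
      field_simp
      ring
    refine ⟨e, fun h0 => ?_⟩
    rw [e]
    positivity
end

section
/- (Proposition 2, Type 1 CCW case.) Fix μ > 0, λ ∈ (0,1), α_0, α⁺ ∈ ℝ, set δ = μ(cos α_0 + ((1−λ)/λ)·cos α⁺) and Ψ = μ(sin α_0 + ((1−λ)/λ)·sin α⁺), and assume δ > 0 (which holds under the Type 1 existence condition λ·cos α_0 + (1−λ)·cos α⁺ > 0). Consider the degree-7 polynomial P(x) = (x² + δ²)·(x² + λΨ·x + λδ²)·(x³ + λΨ·x² + δ²·x + (1−λ)·μ·sin α⁺·δ²) over ℂ. Then: (a) P has the pair of purely imaginary roots ±√−1·δ coming from its first factor; and (b) every root of the remaining degree-5 factor (x² + λΨx + λδ²)(x³ + λΨx² + δ²x + (1−λ)μ sin α⁺ δ²) has strictly negative real part if and only if sin α_0 > 0 and sin α⁺ > 0. -/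
open Real

theorem cubic_hurwitz_fwd (a b c : ℝ) (ha : 0 < a) (hb : 0 < b) (hc : 0 < c) (h : c < a * b)
    (z : ℂ) (hz : z ^ 3 + (a : ℂ) * z ^ 2 + (b : ℂ) * z + (c : ℂ) = 0) : z.re < 0 := by
  obtain ⟨x, y⟩ := z
  have h1 := congrArg Complex.re hz
  have h2 := congrArg Complex.im hz
  simp [pow_succ] at h1 h2
  by_contra! hx
  simp only at hx
  have h2' : y * (3 * x ^ 2 - y ^ 2 + 2 * a * x + b) = 0 := by linarith
  have hx2 : 0 ≤ a * x ^ 2 := by positivity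
  have hx3 : 0 ≤ x ^ 3 := by positivity
  have hbx : 0 ≤ b * x := by positivity
  have hax : 0 ≤ a ^ 2 * x := by positivity
  rcases mul_eq_zero.1 h2' with hy | hy
  · subst hy
    nlinarith
  · have hy2 : y ^ 2 = 3 * x ^ 2 + 2 * a * x + b := by linarith
    have h1' : x ^ 3 - 3 * x * y ^ 2 + a * (x ^ 2 - y ^ 2) + b * x + c = 0 := by linarith
    rw [hy2] at h1'
    nlinarith

theorem quad_hurwitz_fwd (a b : ℝ) (ha : 0 < a) (hb : 0 < b)
    (z : ℂ) (hz : z ^ 2 + (a : ℂ) * z + (b : ℂ) = 0) : z.re < 0 := by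
  obtain ⟨x, y⟩ := z
  have h1 := congrArg Complex.re hz
  have h2 := congrArg Complex.im hz
  simp [pow_succ] at h1 h2
  by_contra! hx
  simp only at hx
  have h2' : y * (2 * x + a) = 0 := by linarith
  rcases mul_eq_zero.1 h2' with hy | hy
  · subst hy
    nlinarith [mul_nonneg ha.le hx]
  · linarith

theorem cubic_hurwitz_bwd (a b c : ℝ) (hb : 0 < b)
    (h : ∀ z : ℂ, z ^ 3 + (a : ℂ) * z ^ 2 + (b : ℂ) * z + (c : ℂ) = 0 → z.re < 0) :
    0 < c ∧ c < a * b := by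
  have hr : ∀ x : ℝ, x ^ 3 + a * x ^ 2 + b * x + c = 0 → x < 0 := by
    intro x hx
    have := h (x : ℂ) (by exact_mod_cast hx)
    simpa using this
  have hcont : Continuous (fun x : ℝ => x ^ 3 + a * x ^ 2 + b * x + c) := by fun_prop
  obtain ⟨M, hM⟩ : ∃ M : ℝ, M = 1 + |a| + |c| := ⟨_, rfl⟩
  have ha0 := abs_nonneg a
  have hc0 := abs_nonneg c
  have hM1 : 1 ≤ M := by linarith
  have hM2 : M ≤ M ^ 2 := by nlinarith
  have hbM : 0 ≤ b * M := by positivity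
  have hcM : 0 ≤ |c| * M ^ 2 := by positivity
  have hM3 : M ^ 3 = M ^ 2 + |a| * M ^ 2 + |c| * M ^ 2 := by
    have : M ^ 3 = M * M ^ 2 := by ring
    rw [this]
    nth_rewrite 1 [hM]
    ring
  have haM1 : a * M ^ 2 ≤ |a| * M ^ 2 := mul_le_mul_of_nonneg_right (le_abs_self a) (by positivity)
  have haM2 : -a * M ^ 2 ≤ |a| * M ^ 2 := mul_le_mul_of_nonneg_right (neg_le_abs a) (by positivity)
  have hc1 := le_abs_self c
  have hc2 := neg_le_abs c
  have hc : 0 < c := by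
    by_contra! hc
    obtain ⟨x, hx, hx'⟩ := intermediate_value_Icc (show (0:ℝ) ≤ M by linarith)
      hcont.continuousOn (show (0:ℝ) ∈ Set.Icc _ _ from ⟨by simpa using hc, by linarith⟩)
    exact absurd (hr x hx') (not_lt.2 hx.1)
  refine ⟨hc, ?_⟩
  obtain ⟨x, hx, hx'⟩ := intermediate_value_Icc (show -M ≤ (0:ℝ) by linarith)
      hcont.continuousOn (show (0:ℝ) ∈ Set.Icc _ _ from
        ⟨by nlinarith, by simpa using hc.le⟩)
  have hx0 := hr x hx'
  simp only at hx'
  obtain ⟨q, hq⟩ : ∃ q, q = a + x := ⟨_, rfl⟩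
  obtain ⟨s, hs⟩ : ∃ s, s = b + x * q := ⟨_, rfl⟩
  have hcs : c = -x * s := by rw [hs, hq]; linarith
  have hs0 : 0 < s := by
    by_contra! h0
    nlinarith
  obtain ⟨w, hw⟩ := IsAlgClosed.exists_pow_nat_eq ((q : ℂ) ^ 2 - 4 * s) (show 0 < 2 by norm_num)
  have fac : ∀ z : ℂ, z ^ 3 + (a : ℂ) * z ^ 2 + (b : ℂ) * z + (c : ℂ)
      = (z - x) * (z ^ 2 + q * z + s) := by
    intro z
    have e1 : (a : ℂ) = q - x := by rw [hq]; push_cast; ring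
    have e2 : (b : ℂ) = s - x * q := by rw [hs]; push_cast; ring
    rw [e1, e2, hcs]; push_cast; ring
  have z1 := h ((-q + w) / 2) (by rw [fac]; linear_combination ((-q + w) / 2 - x) * hw / 4)
  have z2 := h ((-q - w) / 2) (by rw [fac]; linear_combination ((-q - w) / 2 - x) * hw / 4)
  have hsum : ((-q + w) / 2 : ℂ) + ((-q - w) / 2) = ((-q : ℝ) : ℂ) := by push_cast; ring
  have hsr := congrArg Complex.re hsum
  rw [Complex.add_re, Complex.ofReal_re] at hsr
  have hq0 : 0 < q := by linarith
  have e : a * b - c = q * b + x ^ 2 * q := by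
    rw [hcs, show a = q - x by linarith, hs]; ring
  nlinarith [mul_pos hq0 hb, mul_nonneg (sq_nonneg x) hq0.le]

/-- Proposition 2, Type 1 CCW case: the characteristic polynomial has the pure
imaginary pair `±iδ`, and the remaining degree-5 factor has all roots in the
open left half-plane iff `sin α0 > 0` and `sin α⁺ > 0`. -/
theorem stmt19 (μ lam α0 αp : ℝ) (hμ : 0 < μ) (hlam : lam ∈ Set.Ioo (0:ℝ) 1)
    (δ Ψ : ℝ)
    (hδdef : δ = μ * (cos α0 + ((1 - lam) / lam) * cos αp))
    (hΨdef : Ψ = μ * (sin α0 + ((1 - lam) / lam) * sin αp))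
    (hδ : 0 < δ) :
    (let P : ℂ → ℂ := fun z =>
        (z ^ 2 + ((δ ^ 2 : ℝ) : ℂ)) *
        (z ^ 2 + ((lam * Ψ : ℝ) : ℂ) * z + ((lam * δ ^ 2 : ℝ) : ℂ)) *
        (z ^ 3 + ((lam * Ψ : ℝ) : ℂ) * z ^ 2 + ((δ ^ 2 : ℝ) : ℂ) * z
          + (((1 - lam) * μ * sin αp * δ ^ 2 : ℝ) : ℂ))
     (P (Complex.I * (δ : ℂ)) = 0 ∧ P (-(Complex.I * (δ : ℂ))) = 0) ∧
     ((∀ z : ℂ,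
        (z ^ 2 + ((lam * Ψ : ℝ) : ℂ) * z + ((lam * δ ^ 2 : ℝ) : ℂ)) *
        (z ^ 3 + ((lam * Ψ : ℝ) : ℂ) * z ^ 2 + ((δ ^ 2 : ℝ) : ℂ) * z
          + (((1 - lam) * μ * sin αp * δ ^ 2 : ℝ) : ℂ)) = 0 → z.re < 0)
       ↔ (0 < sin α0 ∧ 0 < sin αp))) := by
  obtain ⟨hl0, hl1⟩ := hlam
  have hl : 0 < 1 - lam := by linarith
  have hΨ : lam * Ψ = μ * (lam * sin α0 + (1 - lam) * sin αp) := by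
    rw [hΨdef]; field_simp
  have hd2 : 0 < δ ^ 2 := by positivity
  have hI := Complex.I_sq
  refine ⟨⟨?_, ?_⟩, ?_, ?_⟩
  · have : (Complex.I * (δ : ℂ)) ^ 2 + ((δ ^ 2 : ℝ) : ℂ) = 0 := by
      push_cast; linear_combination (δ : ℂ) ^ 2 * hI
    simp only [this, zero_mul]
  · have : (-(Complex.I * (δ : ℂ))) ^ 2 + ((δ ^ 2 : ℝ) : ℂ) = 0 := by
      push_cast; linear_combination (δ : ℂ) ^ 2 * hI
    simp only [this, zero_mul]
  · intro h
    obtain ⟨h1, h2⟩ := cubic_hurwitz_bwd _ _ _ hd2 (fun z hz => h z (by rw [hz, mul_zero]))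
    have hk : 0 < (1 - lam) * μ * δ ^ 2 := by positivity
    have hm : 0 < μ * lam * δ ^ 2 := by positivity
    constructor
    · rw [hΨ] at h2
      refine pos_of_mul_pos_right (a := μ * lam * δ ^ 2) ?_ hm.le
      nlinarith
    · refine pos_of_mul_pos_right (a := (1 - lam) * μ * δ ^ 2) ?_ hk.le
      nlinarith
  · rintro ⟨h0, hp⟩ z hz
    have hA : 0 < lam * Ψ := by rw [hΨ]; positivity
    rcases mul_eq_zero.1 hz with hz | hz
    · exact quad_hurwitz_fwd _ _ hA (by positivity) z hz
    · refine cubic_hurwitz_fwd _ _ _ hA hd2 (by positivity) ?_ z hz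
      rw [hΨ]
      have : 0 < μ * lam * δ ^ 2 * sin α0 := by positivity
      nlinarith
end
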